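/- In the simplified model, the bias of the integrated-volatility estimator is of order n^{−1/2}: there are constants C > 0 and N such that for all n ≥ N, |E[⟨σ²,1⟩^] − σ²| ≤ C n^{−1/2}, where σ² = ∫₀¹ σ² ds is the true integrated volatility. -/

import Mathlib

open MeasureTheory ProbabilityTheory Real

noncomputable section

/-- `Λ(u) = -∫₀ᵘ λ(v) dv`. -/
def bigLam (lam : ℝ → ℝ) (u : ℝ) : ℝ := -∫ v in (0:ℝ)..u, lam v

/-- A (normalized) pre-average function: piecewise Lipschitz on `[0,2]`,
antisymmetric about `1`, and normalized. -/
structure IsPreAverageFn (lam : ℝ → ℝ) : Prop where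
  piecewise_lipschitz : ∃ (N : ℕ) (t : ℕ → ℝ) (K : NNReal),
      0 < N ∧ t 0 = 0 ∧ t N = 2 ∧ (∀ i < N, t i < t (i + 1)) ∧
      ∀ i < N, LipschitzOnWith K lam (Set.Ioo (t i) (t (i + 1)))
  antisymm : ∀ t ∈ Set.Icc (0:ℝ) 1, lam t = - lam (2 - t)
  normalized : Real.sqrt (2 * ∫ s in (0:ℝ)..1, (∫ u in (0:ℝ)..s, lam u) ^ 2) = 1

/-- `m = n / ⌊√n / c⌋`. -/
def mOf (c : ℝ) (n : ℕ) : ℕ := n / ⌊Real.sqrt n / c⌋₊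

/-- The indices `j` with `j/n ∈ [(i-2)/m , i/m]`. -/
def blockIdx (n m i : ℕ) : Finset ℕ :=
  (Finset.range (n + 1)).filter fun j =>
    ((i : ℝ) - 2) / m ≤ (j : ℝ) / n ∧ (j : ℝ) / n ≤ (i : ℝ) / m

variable {Ω : Type*}

/-- Pre-averaged value `Ā_{i,m} = (m/n) ∑_{j/n ∈ [(i-2)/m, i/m]} λ(m j/n - (i-2)) A_j`. -/
def preAvg (lam : ℝ → ℝ) (n m : ℕ) (A : ℕ → Ω → ℝ) (i : ℕ) (ω : Ω) : ℝ :=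
  ((m : ℝ) / n) * ∑ j ∈ blockIdx n m i,
    lam ((m : ℝ) * j / n - ((i : ℝ) - 2)) * A j ω

/-- Bias correction `𝔟(λ, A)_{i,m}`. -/
def biasCorr (lam : ℝ → ℝ) (n m : ℕ) (A : ℕ → Ω → ℝ) (i : ℕ) (ω : Ω) : ℝ :=
  ((m : ℝ) ^ 2 / (2 * (n : ℝ) ^ 2)) * ∑ j ∈ (blockIdx n m i).filter (fun j => 1 ≤ j),
    (lam ((m : ℝ) * j / n - ((i : ℝ) - 2))) ^ 2 * (A j ω - A (j - 1) ω) ^ 2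

/-- The simplified model: `(W_{j/n})_j` and `(η_{j,n})_j` form a centered jointly Gaussian
family with `Cov(W_{j/n}, W_{l/n}) = min(j,l)/n`, `(η_{j,n})` standard Gaussian i.i.d.
and uncorrelated with the `W` grid values. -/
def IsSimplifiedModel [MeasureSpace Ω] (n : ℕ) (W η : ℕ → Ω → ℝ) : Prop :=
  (∀ j, Measurable (W j)) ∧ (∀ j, Measurable (η j)) ∧
  (∀ a b : ℕ → ℝ, ∃ v : NNReal,
    Measure.map (fun ω => ∑ j ∈ Finset.range (n + 1), (a j * W j ω + b j * η j ω)) ℙ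
      = gaussianReal 0 v) ∧
  (∀ j l, j ≤ n → l ≤ n → ∫ ω, W j ω * W l ω = (min j l : ℝ) / n) ∧
  (∀ j l, j ≤ n → l ≤ n → ∫ ω, η j ω * η l ω = if j = l then 1 else 0) ∧
  (∀ j l, j ≤ n → l ≤ n → ∫ ω, W j ω * η l ω = 0)

/-- The observations `Y_{j,n} = σ W_{j/n} + τ η_{j,n}`. -/
def obs (σ τ : ℝ) (W η : ℕ → Ω → ℝ) (j : ℕ) (ω : Ω) : ℝ := σ * W j ω + τ * η j ω

end

/-! The expectation of a squared block average is a quadratic form in the block weights. Since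
`min s t = ∫ 1_{u ≤ s} 1_{u ≤ t} du`, its Brownian part on the `i`-th block equals
`σ² / m * ((i - 2) * (∑ⱼ wⱼ)² + ∫₀² (∑_{sⱼ ≥ u} wⱼ)² du)`. A grid sum of mesh `h = m / n` of a
function of bounded variation is within `O(h)` of the integral, uniformly over subintervals, so
`∑ⱼ wⱼ = ∫₀² λ + O(h) = O(h)` and `∑_{sⱼ ≥ u} wⱼ = Λ(u) + O(h)`, while `∫₀² Λ² = 1` by the
antisymmetry and the normalization of `λ`. The bias correction cancels the noise part up to the
index `j = 0`, which has no increment, at the price of `O(1 / n)`. Hence each block contributes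
`σ² / m + O(h² + 1 / n)`, and summing the `m - 1` blocks with `m ≍ √n` leaves a bias of order
`1 / √n`. -/

open scoped Topology

theorem boundedVariationOn_Icc_of_Ioo {α E : Type*} [LinearOrder α] [DenselyOrdered α]
    [TopologicalSpace α] [OrderTopology α] [PseudoMetricSpace E] [CompleteSpace E]
    {f : α → E} {a b : α} (hf : BoundedVariationOn f (Set.Ioo a b)) :
    BoundedVariationOn f (Set.Icc a b) := by
  rcases le_or_gt b a with hba | hab
  · exact .of_subsingleton (Set.subsingleton_Icc_of_ge hba)
  have hIoc : BoundedVariationOn f (Set.Ioc a b) := by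
    obtain ⟨y, hy⟩ := hf.exists_tendsto_left b
    have h_inter : Set.Ioo a b ∩ Set.Iio b = Set.Ioc a b ∩ Set.Iio b := by grind
    rw [h_inter] at hy
    have h_ne : (𝓝[Set.Ioc a b ∩ Set.Iio b] b).NeBot := by
      rw [← h_inter, Set.inter_eq_left.2 Set.Ioo_subset_Iio_self]
      exact right_nhdsWithin_Ioo_neBot hab
    have h := eVariationOn.eVariationOn_on_inter_Iic_eq_Iio_add_edist h_ne
      (Set.right_mem_Ioc.2 hab) hy
    rw [← h_inter, Set.inter_eq_left.2 Set.Ioc_subset_Iic_self,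
      Set.inter_eq_left.2 Set.Ioo_subset_Iio_self] at h
    rw [BoundedVariationOn, h]
    exact ENNReal.add_ne_top.2 ⟨hf, edist_ne_top _ _⟩
  obtain ⟨y, hy⟩ := hIoc.exists_tendsto_right a
  have h_inter : Set.Ioc a b ∩ Set.Ioi a = Set.Icc a b ∩ Set.Ioi a := by grind
  rw [h_inter] at hy
  have h_ne : (𝓝[Set.Icc a b ∩ Set.Ioi a] a).NeBot := by
    rw [← h_inter, Set.inter_eq_left.2 Set.Ioc_subset_Ioi_self]
    exact left_nhdsWithin_Ioc_neBot hab
  have h := eVariationOn.eVariationOn_on_inter_Ici_eq_Ioi_add_edist h_ne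
    (Set.left_mem_Icc.2 hab.le) hy
  rw [← h_inter, Set.inter_eq_left.2 Set.Icc_subset_Ici_self,
    Set.inter_eq_left.2 Set.Ioc_subset_Ioi_self] at h
  rw [BoundedVariationOn, h]
  exact ENNReal.add_ne_top.2 ⟨hIoc, edist_ne_top _ _⟩

theorem boundedVariationOn_Icc_of_lipschitzOnWith_Ioo {E : Type*} [PseudoMetricSpace E]
    [CompleteSpace E] {f : ℝ → E} {K : NNReal} {a b : ℝ}
    (hf : LipschitzOnWith K f (Set.Ioo a b)) : BoundedVariationOn f (Set.Icc a b) :=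
  boundedVariationOn_Icc_of_Ioo <| hf.comp_boundedVariationOn (Set.mapsTo_id _)
    ((BoundedVariationOn.id_Icc a b).mono Set.Ioo_subset_Icc_self)

theorem boundedVariationOn_Icc_of_partition {α E : Type*} [LinearOrder α] [PseudoEMetricSpace E]
    {f : α → E} {t : ℕ → α} {N : ℕ} (ht : ∀ i < N, t i ≤ t (i + 1))
    (hf : ∀ i < N, BoundedVariationOn f (Set.Icc (t i) (t (i + 1)))) :
    BoundedVariationOn f (Set.Icc (t 0) (t N)) := by
  have hmono : Monotone fun i ↦ t (min i N) := monotone_nat_of_le_succ fun i ↦ by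
    rcases lt_or_ge i N with hi | hi
    · simpa [hi.le, Nat.succ_le_of_lt hi] using ht i hi
    · simp [hi, hi.trans i.le_succ]
  have hsum := eVariationOn.sum' f hmono (n := N)
  simp only [Nat.zero_min, min_self] at hsum
  rw [BoundedVariationOn, ← hsum, ENNReal.sum_ne_top]
  intro i hi
  have hi : i < N := Finset.mem_range.1 hi
  rw [min_eq_left hi.le, min_eq_left (Nat.succ_le_of_lt hi)]
  exact hf i hi

theorem exists_abs_le_of_boundedVariationOn {α : Type*} [LinearOrder α] {f : α → ℝ} {s : Set α}
    (hf : BoundedVariationOn f s) : ∃ B, ∀ x ∈ s, |f x| ≤ B := by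
  rcases s.eq_empty_or_nonempty with rfl | ⟨a, ha⟩
  · exact ⟨0, fun _ hx ↦ hx.elim⟩
  · exact ⟨(eVariationOn f s).toReal + |f a|, fun x hx ↦ by
      linarith [hf.dist_le hx ha, Real.dist_eq (f x) (f a), abs_sub_abs_le_abs_sub (f x) (f a)]⟩

theorem intervalIntegrable_of_boundedVariationOn {f : ℝ → ℝ} {a b : ℝ}
    (hf : BoundedVariationOn f (Set.uIcc a b)) : IntervalIntegrable f volume a b := by
  obtain ⟨p, q, hp, hq, rfl⟩ := hf.locallyBoundedVariationOn.exists_monotoneOn_sub_monotoneOn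
  exact hp.intervalIntegrable.sub hq.intervalIntegrable

theorem abs_mul_sub_integral_le_of_boundedVariationOn {f : ℝ → ℝ} {a b : ℝ} (hab : a ≤ b)
    (hf : BoundedVariationOn f (Set.Icc a b)) :
    |(b - a) * f a - ∫ x in a..b, f x| ≤ (b - a) * (eVariationOn f (Set.Icc a b)).toReal := by
  have hint : IntervalIntegrable f volume a b :=
    intervalIntegrable_of_boundedVariationOn (by rwa [Set.uIcc_of_le hab])
  calc |(b - a) * f a - ∫ x in a..b, f x| = ‖∫ x in a..b, (f a - f x)‖ := by
        rw [intervalIntegral.integral_sub intervalIntegrable_const hint,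
          intervalIntegral.integral_const, smul_eq_mul, Real.norm_eq_abs]
    _ ≤ (eVariationOn f (Set.Icc a b)).toReal * |b - a| := by
        refine intervalIntegral.norm_integral_le_of_norm_le_const fun x hx ↦ ?_
        rw [Set.uIoc_of_le hab] at hx
        rw [← dist_eq_norm]
        exact hf.dist_le (Set.left_mem_Icc.2 hab) (Set.Ioc_subset_Icc_self hx)
    _ = _ := by rw [abs_of_nonneg (sub_nonneg.2 hab), mul_comm]

theorem abs_riemannSum_sub_integral_le {f : ℝ → ℝ} {x : ℕ → ℝ} {n : ℕ} {δ : ℝ} (hx : Monotone x)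
    (hδ : ∀ j < n, x (j + 1) - x j ≤ δ) (hf : BoundedVariationOn f (Set.Icc (x 0) (x n))) :
    |∑ j ∈ Finset.range n, (x (j + 1) - x j) * f (x j) - ∫ t in x 0..x n, f t|
      ≤ δ * (eVariationOn f (Set.Icc (x 0) (x n))).toReal := by
  have hcell : ∀ j < n, BoundedVariationOn f (Set.Icc (x j) (x (j + 1))) := fun j hj ↦
    hf.mono (Set.Icc_subset_Icc (hx j.zero_le) (hx hj))
  have hint : ∀ j < n, IntervalIntegrable f volume (x j) (x (j + 1)) := fun j hj ↦
    intervalIntegrable_of_boundedVariationOn (by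
      rw [Set.uIcc_of_le (hx j.le_succ)]; exact hcell j hj)
  rw [← intervalIntegral.sum_integral_adjacent_intervals hint, ← Finset.sum_sub_distrib,
    ← eVariationOn.sum' f hx, ENNReal.toReal_sum fun j hj ↦ hcell j (Finset.mem_range.1 hj),
    Finset.mul_sum]
  refine (Finset.abs_sum_le_sum_abs _ _).trans (Finset.sum_le_sum fun j hj ↦ ?_)
  rw [Finset.mem_range] at hj
  calc _ ≤ _ := abs_mul_sub_integral_le_of_boundedVariationOn (hx j.le_succ) (hcell j hj)
    _ ≤ _ := by gcongr; exact hδ j hj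

theorem abs_uniformRiemannSum_sub_integral_le {f : ℝ → ℝ} {h a : ℝ} (hh : 0 ≤ h) {k l : ℕ}
    (hkl : k ≤ l) (hf : BoundedVariationOn f (Set.Icc (h * k - a) (h * l - a))) :
    |h * ∑ j ∈ Finset.Ico k l, f (h * j - a) - ∫ x in (h * k - a)..(h * l - a), f x|
      ≤ h * (eVariationOn f (Set.Icc (h * k - a) (h * l - a))).toReal := by
  obtain ⟨d, rfl⟩ := Nat.exists_eq_add_of_le hkl
  have hriemann := abs_riemannSum_sub_integral_le (f := f)
    (x := fun j ↦ h * ((k + j : ℕ) : ℝ) - a) (n := d) (δ := h)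
    (fun i j hij ↦ by dsimp only; gcongr) (fun j _ ↦ by push_cast; linarith) hf
  have hsum : ∑ j ∈ Finset.range d, (h * ((k + (j + 1) : ℕ) : ℝ) - a
        - (h * ((k + j : ℕ) : ℝ) - a)) * f (h * ((k + j : ℕ) : ℝ) - a)
      = h * ∑ j ∈ Finset.Ico k (k + d), f (h * j - a) := by
    rw [Finset.mul_sum, Finset.sum_Ico_eq_sum_range, Nat.add_sub_cancel_left]
    refine Finset.sum_congr rfl fun j _ ↦ ?_
    push_cast
    ring
  rwa [hsum] at hriemann

theorem exists_eq_Ico_of_mem_iff_mem_Icc {h a u v : ℝ} (hh : 0 < h) (huv : u ≤ v)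
    (hua : 0 ≤ u + a) {J : Finset ℕ} (hJ : ∀ j : ℕ, j ∈ J ↔ h * j - a ∈ Set.Icc u v) :
    ∃ k l : ℕ, k ≤ l ∧ J = Finset.Ico k l ∧ |h * k - a - u| ≤ h ∧ |h * l - a - v| ≤ h := by
  have hu : 0 ≤ (u + a) / h := by positivity
  have hle : (u + a) / h ≤ (v + a) / h := by gcongr
  have hceil := Nat.le_ceil ((u + a) / h)
  have hceil' := Nat.ceil_lt_add_one hu
  have hfloor := Nat.floor_le (hu.trans hle)
  have hfloor' := Nat.lt_floor_add_one ((v + a) / h)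
  refine ⟨⌈(u + a) / h⌉₊, ⌊(v + a) / h⌋₊ + 1, Nat.ceil_le.2 ?_, ?_, ?_, ?_⟩
  · push_cast
    exact hle.trans hfloor'.le
  · ext j
    rw [hJ, Finset.mem_Ico, Nat.lt_succ_iff, Nat.ceil_le, Nat.le_floor_iff (hu.trans hle),
      div_le_iff₀ hh, le_div_iff₀ hh, Set.mem_Icc, le_sub_iff_add_le, sub_le_iff_le_add, mul_comm]
  · rw [div_le_iff₀ hh] at hceil
    rw [div_add_one hh.ne', lt_div_iff₀ hh] at hceil'
    rw [abs_le]
    constructor <;> linarith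
  · rw [le_div_iff₀ hh] at hfloor
    rw [div_lt_iff₀ hh] at hfloor'
    rw [abs_le]
    push_cast
    constructor <;> linarith

/- The grid cells may miss or stick out of `[u, v]` by a mesh at each end, whence the `2 * B`;
extending `f` by its boundary values increases neither its variation nor its supremum. -/
theorem abs_gridSum_sub_integral_le {f : ℝ → ℝ} {u v B : ℝ} (huv : u ≤ v)
    (hf : BoundedVariationOn f (Set.Icc u v)) (hB : ∀ x ∈ Set.Icc u v, |f x| ≤ B)
    {h a : ℝ} (hh : 0 < h) (hua : 0 ≤ u + a) {J : Finset ℕ}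
    (hJ : ∀ j : ℕ, j ∈ J ↔ h * j - a ∈ Set.Icc u v) :
    |h * ∑ j ∈ J, f (h * j - a) - ∫ x in u..v, f x|
      ≤ h * ((eVariationOn f (Set.Icc u v)).toReal + 2 * B) := by
  obtain ⟨k, l, hkl, rfl, hk, hl⟩ := exists_eq_Ico_of_mem_iff_mem_Icc hh huv hua hJ
  set φ : ℝ → ℝ := fun x ↦ Set.projIcc u v huv x with hφ
  have hφ_mem : ∀ x, φ x ∈ Set.Icc u v := fun x ↦ (Set.projIcc u v huv x).2
  have hφ_eq : ∀ x ∈ Set.Icc u v, f x = (f ∘ φ) x := fun x hx ↦ by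
    simp [hφ, Set.projIcc_of_mem huv hx]
  have hvar : ∀ s, eVariationOn (f ∘ φ) s ≤ eVariationOn f (Set.Icc u v) := fun s ↦
    eVariationOn.comp_le_of_monotoneOn f φ
      (fun x _ y _ hxy ↦ Set.monotone_projIcc huv hxy) fun x _ ↦ hφ_mem x
  have hbv : ∀ s, BoundedVariationOn (f ∘ φ) s := fun s ↦ ne_top_of_le_ne_top hf (hvar s)
  have hint : ∀ x y, IntervalIntegrable (f ∘ φ) volume x y := fun x y ↦
    intervalIntegrable_of_boundedVariationOn (hbv _)
  have hend : ∀ x y, |y - x| ≤ h → |∫ t in x..y, (f ∘ φ) t| ≤ B * h := fun x y hxy ↦ by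
    have hB0 : 0 ≤ B := (abs_nonneg _).trans (hB u (Set.left_mem_Icc.2 huv))
    refine (intervalIntegral.norm_integral_le_of_norm_le_const (f := f ∘ φ) (C := B)
      fun t _ ↦ hB (φ t) (hφ_mem t)).trans ?_
    gcongr
  have hsum : ∑ j ∈ Finset.Ico k l, f (h * j - a) = ∑ j ∈ Finset.Ico k l, (f ∘ φ) (h * j - a) :=
    Finset.sum_congr rfl fun j hj ↦ hφ_eq _ ((hJ j).1 hj)
  have hsplit : ∫ x in u..v, f x = (∫ x in u..(h * k - a), (f ∘ φ) x)
      + (∫ x in (h * k - a)..(h * l - a), (f ∘ φ) x) + ∫ x in (h * l - a)..v, (f ∘ φ) x := by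
    rw [intervalIntegral.integral_add_adjacent_intervals (hint _ _) (hint _ _),
      intervalIntegral.integral_add_adjacent_intervals (hint _ _) (hint _ _)]
    exact intervalIntegral.integral_congr fun x hx ↦ hφ_eq x (by rwa [Set.uIcc_of_le huv] at hx)
  have hgrid := abs_uniformRiemannSum_sub_integral_le (a := a) hh.le hkl (hbv _)
  have hV := mul_le_mul_of_nonneg_left
    (ENNReal.toReal_mono hf (hvar (Set.Icc (h * k - a) (h * l - a)))) hh.le
  have hleft := hend _ _ hk
  have hright := hend (h * l - a) v (by rwa [abs_sub_comm])
  rw [hsum, hsplit]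
  rw [abs_le] at *
  constructor <;> linarith

theorem sq_sum_filter_le_eq_sum_sum_indicator {ι : Type*} (J : Finset ι) (s w : ι → ℝ) (u : ℝ) :
    (∑ j ∈ J with u ≤ s j, w j) ^ 2
      = ∑ j ∈ J, ∑ l ∈ J, {x | x ≤ min (s j) (s l)}.indicator (fun _ ↦ w j * w l) u := by
  rw [sq, Finset.sum_filter, Finset.sum_mul_sum]
  refine Finset.sum_congr rfl fun j _ ↦ Finset.sum_congr rfl fun l _ ↦ ?_
  by_cases hj : u ≤ s j <;> by_cases hl : u ≤ s l <;> simp [hj, hl]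

theorem intervalIntegrable_indicator_const {s : Set ℝ} (hs : MeasurableSet s) (c a b : ℝ) :
    IntervalIntegrable (s.indicator fun _ ↦ c) volume a b :=
  intervalIntegrable_iff.2 <| intervalIntegrable_const.def'.indicator hs

theorem intervalIntegrable_sq_sum_filter_le {ι : Type*} (J : Finset ι) (s w : ι → ℝ) (a b : ℝ) :
    IntervalIntegrable (fun u ↦ (∑ j ∈ J with u ≤ s j, w j) ^ 2) volume a b := by
  simp only [sq_sum_filter_le_eq_sum_sum_indicator, ← Finset.sum_apply]
  exact .sum _ fun j _ ↦ .sum _ fun l _ ↦ intervalIntegrable_indicator_const measurableSet_Iic _ _ _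

theorem sum_sum_mul_min_eq_integral_sq {ι : Type*} {J : Finset ι} {s : ι → ℝ} {T : ℝ}
    (hs : ∀ j ∈ J, s j ∈ Set.Icc 0 T) (w : ι → ℝ) :
    ∑ j ∈ J, ∑ l ∈ J, w j * w l * min (s j) (s l)
      = ∫ u in 0..T, (∑ j ∈ J with u ≤ s j, w j) ^ 2 := by
  have hint : ∀ j l, IntervalIntegrable
      ({x | x ≤ min (s j) (s l)}.indicator fun _ ↦ w j * w l) volume 0 T := fun j l ↦
    intervalIntegrable_indicator_const measurableSet_Iic _ _ _
  simp only [sq_sum_filter_le_eq_sum_sum_indicator]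
  rw [intervalIntegral.integral_finsetSum fun j _ ↦ by
    simpa only [← Finset.sum_apply] using IntervalIntegrable.sum _ fun l _ ↦ hint j l]
  refine Finset.sum_congr rfl fun j hj ↦ ?_
  rw [intervalIntegral.integral_finsetSum fun l _ ↦ hint j l]
  refine Finset.sum_congr rfl fun l hl ↦ ?_
  rw [intervalIntegral.integral_indicator ⟨le_min (hs j hj).1 (hs l hl).1,
    (min_le_left _ _).trans (hs j hj).2⟩, intervalIntegral.integral_const, smul_eq_mul, sub_zero,
    mul_comm]

theorem abs_sum_sum_mul_min_sub_integral_sq_le {ι : Type*} {J : Finset ι} {s w : ι → ℝ}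
    {T M ε : ℝ} {G : ℝ → ℝ} (hT : 0 ≤ T) (hs : ∀ j ∈ J, s j ∈ Set.Icc 0 T)
    (hG : IntervalIntegrable (fun u ↦ G u ^ 2) volume 0 T) (hGM : ∀ u ∈ Set.Icc 0 T, |G u| ≤ M)
    (hw : ∀ u ∈ Set.Icc 0 T, |∑ j ∈ J with u ≤ s j, w j - G u| ≤ ε) :
    |∑ j ∈ J, ∑ l ∈ J, w j * w l * min (s j) (s l) - ∫ u in 0..T, G u ^ 2|
      ≤ ε * (2 * M + ε) * T := by
  rw [sum_sum_mul_min_eq_integral_sq hs, ← intervalIntegral.integral_sub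
    (intervalIntegrable_sq_sum_filter_le J s w 0 T) hG, ← Real.norm_eq_abs]
  convert intervalIntegral.norm_integral_le_of_norm_le_const fun u hu ↦ ?_ using 2
  · rw [sub_zero, abs_of_nonneg hT]
  have hu' : u ∈ Set.Icc 0 T := Set.Ioc_subset_Icc_self (by rwa [Set.uIoc_of_le hT] at hu)
  have hdiff := hw u hu'
  have hsum : |∑ j ∈ J with u ≤ s j, w j + G u| ≤ 2 * M + ε := by
    have hGu := hGM u hu'
    rw [abs_le] at *
    constructor <;> linarith
  rw [Real.norm_eq_abs, sq_sub_sq, abs_mul, mul_comm]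
  gcongr
  exact (abs_nonneg _).trans hdiff

section WeightedGridSums

variable {f : ℝ → ℝ} {T B h a : ℝ} {J : Finset ℕ}

theorem abs_sum_sum_grid_mul_min_sub_integral_sq_le (hT : 0 ≤ T)
    (hf : BoundedVariationOn f (Set.Icc 0 T)) (hB : ∀ x ∈ Set.Icc 0 T, |f x| ≤ B)
    (hh : 0 < h) (ha : 0 ≤ a) (hJ : ∀ j : ℕ, j ∈ J ↔ h * j - a ∈ Set.Icc 0 T) :
    |∑ j ∈ J, ∑ l ∈ J, h * f (h * j - a) * (h * f (h * l - a)) * min (h * j - a) (h * l - a)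
        - ∫ u in 0..T, (∫ x in u..T, f x) ^ 2|
      ≤ h * ((eVariationOn f (Set.Icc 0 T)).toReal + 2 * B) * (2 * (B * T)
        + h * ((eVariationOn f (Set.Icc 0 T)).toReal + 2 * B)) * T := by
  have hB0 : 0 ≤ B := (abs_nonneg _).trans (hB 0 (Set.left_mem_Icc.2 hT))
  have hint : IntervalIntegrable f volume 0 T :=
    intervalIntegrable_of_boundedVariationOn (by rwa [Set.uIcc_of_le hT])
  have hcont : ContinuousOn (fun u ↦ (∫ x in u..T, f x) ^ 2) (Set.uIcc 0 T) := by
    simp only [intervalIntegral.integral_symm T, neg_sq]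
    exact (intervalIntegral.continuousOn_primitive_interval' hint Set.right_mem_uIcc).pow 2
  refine abs_sum_sum_mul_min_sub_integral_sq_le (w := fun j : ℕ ↦ h * f (h * j - a)) hT
    (fun j hj ↦ (hJ j).1 hj) hcont.intervalIntegrable (fun u hu ↦ ?_) fun u hu ↦ ?_
  · calc |∫ x in u..T, f x| ≤ B * |T - u| :=
          intervalIntegral.norm_integral_le_of_norm_le_const (f := f) fun x hx ↦ hB x <| by
            rw [Set.uIoc_of_le hu.2] at hx
            exact ⟨hu.1.trans hx.1.le, hx.2⟩
      _ ≤ B * T := by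
          rw [abs_of_nonneg (sub_nonneg.2 hu.2)]
          gcongr
          linarith [hu.1]
  · have hsub : Set.Icc u T ⊆ Set.Icc 0 T := Set.Icc_subset_Icc_left hu.1
    have hJu : ∀ j : ℕ, j ∈ ({j ∈ J | u ≤ h * j - a} : Finset ℕ) ↔ h * j - a ∈ Set.Icc u T := by
      intro j
      rw [Finset.mem_filter, hJ]
      exact ⟨fun hj ↦ ⟨hj.2, hj.1.2⟩, fun hj ↦ ⟨hsub hj, hj.1⟩⟩
    rw [← Finset.mul_sum]
    refine (abs_gridSum_sub_integral_le hu.2 (hf.mono hsub) (fun x hx ↦ hB x (hsub hx)) hh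
      (add_nonneg hu.1 ha) hJu).trans ?_
    gcongr
    exact eVariationOn.mono f hsub

theorem sum_sq_grid_le (hT : 0 ≤ T) (hB : ∀ x ∈ Set.Icc 0 T, |f x| ≤ B) (hh : 0 < h)
    (ha : 0 ≤ a) (hJ : ∀ j : ℕ, j ∈ J ↔ h * j - a ∈ Set.Icc 0 T) :
    ∑ j ∈ J, (h * f (h * j - a)) ^ 2 ≤ h * B ^ 2 * (T + 2 * h) := by
  have hcard : h * (J.card : ℝ) ≤ T + 2 * h := by
    have hvar : eVariationOn (fun _ : ℝ ↦ (1 : ℝ)) (Set.Icc 0 T) = 0 :=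
      eVariationOn.constant_on (Set.subsingleton_of_forall_eq 1 fun y ⟨_, _, hy⟩ ↦ hy.symm)
    have hgrid := abs_gridSum_sub_integral_le (f := fun _ ↦ 1) (B := 1) hT
      (by simp [BoundedVariationOn, hvar]) (by simp) hh (by simpa using ha) hJ
    simp only [hvar, Finset.sum_const, nsmul_eq_mul, mul_one, intervalIntegral.integral_const,
      sub_zero, smul_eq_mul, ENNReal.toReal_zero, zero_add] at hgrid
    linarith [(abs_le.1 hgrid).2]
  calc ∑ j ∈ J, (h * f (h * j - a)) ^ 2 ≤ J.card • (h * B) ^ 2 :=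
        Finset.sum_le_card_nsmul _ _ _ fun j hj ↦ by
          rw [mul_pow, mul_pow, ← sq_abs (f _)]
          gcongr
          exact hB _ ((hJ j).1 hj)
    _ = h * B ^ 2 * (h * J.card) := by rw [nsmul_eq_mul]; ring
    _ ≤ h * B ^ 2 * (T + 2 * h) := by gcongr

end WeightedGridSums

theorem bigLam_eq_integral {lam : ℝ → ℝ} (hint : IntervalIntegrable lam volume 0 2)
    (hmean : ∫ x in 0..2, lam x = 0) {u : ℝ} (hu : u ∈ Set.Icc 0 2) :
    bigLam lam u = ∫ x in u..2, lam x := by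
  have hleft : IntervalIntegrable lam volume 0 u := hint.mono_set <| by
    rw [Set.uIcc_of_le hu.1, Set.uIcc_of_le zero_le_two]
    exact Set.Icc_subset_Icc_right hu.2
  rw [← intervalIntegral.integral_interval_sub_left hint hleft, hmean, zero_sub, bigLam]

theorem integral_sq_integral_right_eq_bigLam_sq {lam : ℝ → ℝ}
    (hint : IntervalIntegrable lam volume 0 2) (hmean : ∫ x in 0..2, lam x = 0) :
    ∫ u in 0..2, (∫ x in u..2, lam x) ^ 2 = ∫ u in 0..2, bigLam lam u ^ 2 := by
  refine intervalIntegral.integral_congr fun u hu ↦ ?_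
  rw [Set.uIcc_of_le zero_le_two] at hu
  simp only [bigLam_eq_integral hint hmean hu]

namespace IsPreAverageFn

variable {lam : ℝ → ℝ}

theorem boundedVariationOn (hlam : IsPreAverageFn lam) :
    BoundedVariationOn lam (Set.Icc 0 2) := by
  obtain ⟨N, t, K, -, h_zero, h_two, hlt, hlip⟩ := hlam.piecewise_lipschitz
  rw [← h_zero, ← h_two]
  exact boundedVariationOn_Icc_of_partition (fun i hi ↦ (hlt i hi).le) fun i hi ↦
    boundedVariationOn_Icc_of_lipschitzOnWith_Ioo (hlip i hi)

theorem intervalIntegrable (hlam : IsPreAverageFn lam) : IntervalIntegrable lam volume 0 2 :=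
  intervalIntegrable_of_boundedVariationOn <| by
    rw [Set.uIcc_of_le zero_le_two]
    exact hlam.boundedVariationOn

theorem apply_two_sub (hlam : IsPreAverageFn lam) {x : ℝ} (hx : x ∈ Set.Icc 0 2) :
    lam (2 - x) = -lam x := by
  rcases le_total x 1 with h | h
  · rw [hlam.antisymm x ⟨hx.1, h⟩, neg_neg]
  · rw [hlam.antisymm (2 - x) ⟨by linarith [hx.2], by linarith⟩, sub_sub_cancel]

theorem integral_two_sub (hlam : IsPreAverageFn lam) {u : ℝ} (hu : u ∈ Set.Icc 0 2) :
    ∫ x in 0..(2 - u), lam x = -∫ x in u..2, lam x := by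
  have hreflect := intervalIntegral.integral_comp_sub_left lam (a := u) (b := 2) 2
  rw [sub_self] at hreflect
  rw [← hreflect, ← intervalIntegral.integral_neg]
  refine intervalIntegral.integral_congr fun x hx ↦ hlam.apply_two_sub ?_
  rw [Set.uIcc_of_le hu.2] at hx
  exact ⟨hu.1.trans hx.1, hx.2⟩

theorem integral_eq_zero (hlam : IsPreAverageFn lam) : ∫ x in 0..2, lam x = 0 := by
  have h := hlam.integral_two_sub (Set.left_mem_Icc.2 zero_le_two)
  rw [sub_zero] at h
  linarith

theorem bigLam_two_sub (hlam : IsPreAverageFn lam) {u : ℝ} (hu : u ∈ Set.Icc 0 2) :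
    bigLam lam (2 - u) = bigLam lam u := by
  rw [bigLam_eq_integral hlam.intervalIntegrable hlam.integral_eq_zero hu, bigLam,
    hlam.integral_two_sub hu, neg_neg]

theorem integral_bigLam_sq (hlam : IsPreAverageFn lam) : ∫ u in 0..2, bigLam lam u ^ 2 = 1 := by
  have hint : ∀ a b, a ∈ Set.Icc 0 2 → b ∈ Set.Icc 0 2 →
      IntervalIntegrable (fun u ↦ bigLam lam u ^ 2) volume a b := fun a b ha hb ↦ by
    have hcont : ContinuousOn (fun u ↦ bigLam lam u ^ 2) (Set.uIcc 0 2) :=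
      (intervalIntegral.continuousOn_primitive_interval' hlam.intervalIntegrable
        Set.left_mem_uIcc).neg.pow 2
    refine (hcont.mono ?_).intervalIntegrable
    rw [Set.uIcc_of_le zero_le_two]
    exact Set.uIcc_subset_Icc ha hb
  have hsymm : ∫ u in 1..2, bigLam lam u ^ 2 = ∫ u in 0..1, bigLam lam u ^ 2 := by
    have hreflect := intervalIntegral.integral_comp_sub_left (fun u ↦ bigLam lam u ^ 2)
      (a := 0) (b := 1) 2
    norm_num only at hreflect
    rw [← hreflect]
    refine intervalIntegral.integral_congr fun u hu ↦ ?_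
    rw [Set.uIcc_of_le zero_le_one] at hu
    simp only [hlam.bigLam_two_sub ⟨hu.1, hu.2.trans one_le_two⟩]
  have hnorm := Real.sqrt_eq_one.1 hlam.normalized
  rw [← intervalIntegral.integral_add_adjacent_intervals
    (hint 0 1 (by norm_num) (by norm_num)) (hint 1 2 (by norm_num) (by norm_num)), hsymm, ← two_mul]
  simpa only [bigLam, neg_sq] using hnorm

end IsPreAverageFn

theorem memLp_sum_mul {α ι : Type*} [MeasurableSpace α] {μ : Measure α} {p : ENNReal}
    {J : Finset ι} {X : ι → α → ℝ} (hX : ∀ j ∈ J, MemLp (X j) p μ) (w : ι → ℝ) :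
    MemLp (fun ω ↦ ∑ j ∈ J, w j * X j ω) p μ :=
  memLp_finsetSum J fun j hj ↦ (hX j hj).const_mul (w j)

theorem integral_sq_sum_mul {α ι : Type*} [MeasurableSpace α] {μ : Measure α} {J : Finset ι}
    {X : ι → α → ℝ} (hX : ∀ j ∈ J, MemLp (X j) 2 μ) (w : ι → ℝ) :
    ∫ ω, (∑ j ∈ J, w j * X j ω) ^ 2 ∂μ
      = ∑ j ∈ J, ∑ l ∈ J, w j * w l * ∫ ω, X j ω * X l ω ∂μ := by
  have hint : ∀ j ∈ J, ∀ l ∈ J, Integrable (fun ω ↦ w j * X j ω * (w l * X l ω)) μ :=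
    fun j hj l hl ↦ ((hX j hj).const_mul _).integrable_mul ((hX l hl).const_mul _)
  simp only [sq, Finset.sum_mul_sum]
  rw [integral_finsetSum _ fun j hj ↦ integrable_finsetSum _ (hint j hj)]
  refine Finset.sum_congr rfl fun j hj ↦ ?_
  rw [integral_finsetSum _ (hint j hj)]
  refine Finset.sum_congr rfl fun l _ ↦ ?_
  rw [← integral_const_mul]
  exact integral_congr_ae (.of_forall fun ω ↦ by ring)

theorem integral_sq_sub {α : Type*} [MeasurableSpace α] {μ : Measure α} {X Y : α → ℝ}
    (hX : MemLp X 2 μ) (hY : MemLp Y 2 μ) :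
    ∫ ω, (X ω - Y ω) ^ 2 ∂μ
      = ∫ ω, X ω * X ω ∂μ - 2 * ∫ ω, X ω * Y ω ∂μ + ∫ ω, Y ω * Y ω ∂μ := by
  have hXX : Integrable (fun ω ↦ X ω * X ω) μ := hX.integrable_mul hX
  have hXY : Integrable (fun ω ↦ 2 * (X ω * Y ω)) μ := (hX.integrable_mul hY).const_mul 2
  have hYY : Integrable (fun ω ↦ Y ω * Y ω) μ := hY.integrable_mul hY
  rw [← integral_const_mul, ← integral_sub hXX hXY, ← integral_add (hXX.sub' hXY) hYY]
  exact integral_congr_ae (.of_forall fun ω ↦ by ring)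

/-- The second-order part of `IsSimplifiedModel`: square integrability on the grid and the second
moments, from which the bias of the estimator is computed. -/
structure IsSecondOrderModel {Ω : Type*} [MeasureSpace Ω] (n : ℕ) (W η : ℕ → Ω → ℝ) : Prop where
  memLp_W : ∀ j ≤ n, MemLp (W j) 2
  memLp_η : ∀ j ≤ n, MemLp (η j) 2
  integral_W_mul_W : ∀ j ≤ n, ∀ l ≤ n, ∫ ω, W j ω * W l ω = (min j l : ℝ) / n
  integral_η_mul_η : ∀ j ≤ n, ∀ l ≤ n, ∫ ω, η j ω * η l ω = if j = l then 1 else 0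
  integral_W_mul_η : ∀ j ≤ n, ∀ l ≤ n, ∫ ω, W j ω * η l ω = 0

theorem IsSimplifiedModel.isSecondOrderModel {Ω : Type*} [MeasureSpace Ω] {n : ℕ}
    {W η : ℕ → Ω → ℝ} (hmodel : IsSimplifiedModel n W η) : IsSecondOrderModel n W η := by
  obtain ⟨hW, hη, hgauss, hWW, hηη, hWη⟩ := hmodel
  have memLp_of_gaussian : ∀ {X : Ω → ℝ}, Measurable X →
      (∃ v, Measure.map X ℙ = gaussianReal 0 v) → MemLp X 2 := fun {X} hX ⟨v, hv⟩ ↦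
    (memLp_map_measure_iff (g := id) (by fun_prop) hX.aemeasurable).1 <|
      hv ▸ memLp_id_gaussianReal 2
  refine ⟨fun j hj ↦ memLp_of_gaussian (hW j) ?_, fun j hj ↦ memLp_of_gaussian (hη j) ?_,
    fun j hj l hl ↦ hWW j l hj hl, fun j hj l hl ↦ hηη j l hj hl,
    fun j hj l hl ↦ hWη j l hj hl⟩
  · simpa [Finset.sum_ite_eq', Nat.lt_succ_of_le hj] using hgauss (fun k ↦ if k = j then 1 else 0) 0
  · simpa [Finset.sum_ite_eq', Nat.lt_succ_of_le hj] using hgauss 0 fun k ↦ if k = j then 1 else 0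

/-- The position `m * (j / n) - (i - 2)`, in `[0, 2]`, of the grid index `j` in the `i`-th block,
rescaled to the domain of the pre-average function. -/
noncomputable def blockPos (n m i j : ℕ) : ℝ := (m : ℝ) / n * j - ((i : ℝ) - 2)

/-- The coefficient of the `j`-th observation in the `i`-th pre-average. -/
noncomputable def blockWeight (lam : ℝ → ℝ) (n m i j : ℕ) : ℝ :=
  (m : ℝ) / n * lam (blockPos n m i j)

section Blocks

variable {n m i : ℕ}

theorem le_of_mem_blockIdx {j : ℕ} (hj : j ∈ blockIdx n m i) : j ≤ n :=
  Nat.lt_succ_iff.1 (Finset.mem_range.1 (Finset.mem_filter.1 hj).1)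

theorem mem_blockIdx_iff (hn : 0 < n) (hm : 0 < m) (him : i ≤ m) {j : ℕ} :
    j ∈ blockIdx n m i ↔ blockPos n m i j ∈ Set.Icc 0 2 := by
  have hn' : (0 : ℝ) < n := Nat.cast_pos.2 hn
  have hm' : (0 : ℝ) < m := Nat.cast_pos.2 hm
  have hiff : blockPos n m i j ∈ Set.Icc 0 2
      ↔ ((i : ℝ) - 2) / m ≤ (j : ℝ) / n ∧ (j : ℝ) / n ≤ (i : ℝ) / m := by
    rw [blockPos, Set.mem_Icc, sub_nonneg, sub_le_iff_le_add' (c := (2 : ℝ)), sub_add_cancel,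
      div_le_iff₀' hm', le_div_iff₀' hm', div_mul_eq_mul_div, mul_div_assoc]
  rw [hiff, blockIdx, Finset.mem_filter, Finset.mem_range, and_iff_right_iff_imp]
  rintro ⟨-, hj⟩
  have hle : (j : ℝ) / n ≤ 1 := hj.trans ((div_le_one hm').2 (Nat.cast_le.2 him))
  exact Nat.lt_succ_of_le (Nat.cast_le.1 ((div_le_one hn').1 hle))

theorem min_div_eq_add_min_blockPos_div (hn : 0 < n) (hm : 0 < m) (j l : ℕ) :
    (min j l : ℝ) / n = ((i : ℝ) - 2 + min (blockPos n m i j) (blockPos n m i l)) / m := by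
  have hn' : (n : ℝ) ≠ 0 := by positivity
  have hm' : (m : ℝ) ≠ 0 := by positivity
  rw [blockPos, blockPos, min_sub_sub_right, ← mul_min_of_nonneg _ _ (by positivity)]
  field_simp
  ring

variable {Ω : Type*} {lam : ℝ → ℝ}

theorem preAvg_eq_sum_blockWeight (A : ℕ → Ω → ℝ) (ω : Ω) :
    preAvg lam n m A i ω = ∑ j ∈ blockIdx n m i, blockWeight lam n m i j * A j ω := by
  simp only [preAvg, blockWeight, blockPos, Finset.mul_sum, mul_assoc, mul_div_right_comm]

theorem biasCorr_eq_sum_blockWeight (A : ℕ → Ω → ℝ) (ω : Ω) :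
    biasCorr lam n m A i ω = ∑ j ∈ blockIdx n m i with 1 ≤ j,
      blockWeight lam n m i j ^ 2 / 2 * (A j ω - A (j - 1) ω) ^ 2 := by
  rw [biasCorr, Finset.mul_sum]
  refine Finset.sum_congr rfl fun j _ ↦ ?_
  rw [blockWeight, blockPos, mul_div_right_comm (m : ℝ)]
  ring

end Blocks

namespace IsSecondOrderModel

variable {Ω : Type*} [MeasureSpace Ω] {n m i : ℕ} {W η : ℕ → Ω → ℝ} {lam : ℝ → ℝ}

theorem memLp_obs (hmodel : IsSecondOrderModel n W η) (σ τ : ℝ) {j : ℕ} (hj : j ≤ n) :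
    MemLp (obs σ τ W η j) 2 :=
  ((hmodel.memLp_W j hj).const_mul σ).add ((hmodel.memLp_η j hj).const_mul τ)

theorem integral_obs_mul_obs (hmodel : IsSecondOrderModel n W η) (σ τ : ℝ) {j l : ℕ}
    (hj : j ≤ n) (hl : l ≤ n) :
    ∫ ω, obs σ τ W η j ω * obs σ τ W η l ω
      = σ ^ 2 * ((min j l : ℝ) / n) + τ ^ 2 * if j = l then 1 else 0 := by
  have hWW : Integrable fun ω ↦ σ ^ 2 * (W j ω * W l ω) :=
    ((hmodel.memLp_W j hj).integrable_mul (hmodel.memLp_W l hl)).const_mul _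
  have hWη : Integrable fun ω ↦ σ * τ * (W j ω * η l ω) :=
    ((hmodel.memLp_W j hj).integrable_mul (hmodel.memLp_η l hl)).const_mul _
  have hηW : Integrable fun ω ↦ σ * τ * (W l ω * η j ω) :=
    ((hmodel.memLp_W l hl).integrable_mul (hmodel.memLp_η j hj)).const_mul _
  have hηη : Integrable fun ω ↦ τ ^ 2 * (η j ω * η l ω) :=
    ((hmodel.memLp_η j hj).integrable_mul (hmodel.memLp_η l hl)).const_mul _
  have h_two : Integrable fun ω ↦ σ ^ 2 * (W j ω * W l ω) + σ * τ * (W j ω * η l ω) := hWW.add hWη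
  have h_three : Integrable fun ω ↦ σ ^ 2 * (W j ω * W l ω) + σ * τ * (W j ω * η l ω)
      + σ * τ * (W l ω * η j ω) := h_two.add hηW
  calc ∫ ω, obs σ τ W η j ω * obs σ τ W η l ω
      = ∫ ω, (σ ^ 2 * (W j ω * W l ω) + σ * τ * (W j ω * η l ω) + σ * τ * (W l ω * η j ω)
          + τ ^ 2 * (η j ω * η l ω)) := by
        refine integral_congr_ae (.of_forall fun ω ↦ ?_)
        simp only [obs]
        ring
    _ = _ := by
        rw [integral_add h_three hηη, integral_add h_two hηW, integral_add hWW hWη]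
        simp only [integral_const_mul]
        rw [hmodel.integral_W_mul_W j hj l hl, hmodel.integral_W_mul_η j hj l hl,
          hmodel.integral_W_mul_η l hl j hj, hmodel.integral_η_mul_η j hj l hl]
        ring

theorem integrable_sq_obs_increment (hmodel : IsSecondOrderModel n W η) (σ τ : ℝ) {j : ℕ}
    (hj : j ≤ n) : Integrable fun ω ↦ (obs σ τ W η j ω - obs σ τ W η (j - 1) ω) ^ 2 :=
  ((hmodel.memLp_obs σ τ hj).sub (hmodel.memLp_obs σ τ ((Nat.sub_le _ _).trans hj))).integrable_sq

theorem integral_sq_obs_increment (hmodel : IsSecondOrderModel n W η) (σ τ : ℝ) {j : ℕ}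
    (hj : j ≤ n) (hj_pos : 1 ≤ j) :
    ∫ ω, (obs σ τ W η j ω - obs σ τ W η (j - 1) ω) ^ 2 = σ ^ 2 / n + 2 * τ ^ 2 := by
  obtain ⟨k, rfl⟩ := Nat.exists_eq_add_of_le' hj_pos
  have hk : k ≤ n := k.le_succ.trans hj
  rw [Nat.add_sub_cancel, integral_sq_sub (hmodel.memLp_obs σ τ hj) (hmodel.memLp_obs σ τ hk),
    hmodel.integral_obs_mul_obs σ τ hj hj, hmodel.integral_obs_mul_obs σ τ hj hk,
    hmodel.integral_obs_mul_obs σ τ hk hk, if_pos rfl, if_pos rfl, if_neg k.succ_ne_self,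
    min_self, min_self, min_eq_right (by push_cast; linarith)]
  push_cast
  ring

theorem integrable_sq_preAvg (hmodel : IsSecondOrderModel n W η) (σ τ : ℝ) :
    Integrable fun ω ↦ preAvg lam n m (obs σ τ W η) i ω ^ 2 := by
  simp only [preAvg_eq_sum_blockWeight]
  exact (memLp_sum_mul (fun j hj ↦ hmodel.memLp_obs σ τ (le_of_mem_blockIdx hj)) _).integrable_sq

theorem integral_sq_preAvg (hmodel : IsSecondOrderModel n W η) (σ τ : ℝ) :
    ∫ ω, preAvg lam n m (obs σ τ W η) i ω ^ 2
      = σ ^ 2 * ∑ j ∈ blockIdx n m i, ∑ l ∈ blockIdx n m i,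
          blockWeight lam n m i j * blockWeight lam n m i l * ((min j l : ℝ) / n)
        + τ ^ 2 * ∑ j ∈ blockIdx n m i, blockWeight lam n m i j ^ 2 := by
  simp only [preAvg_eq_sum_blockWeight]
  rw [integral_sq_sum_mul fun j hj ↦ hmodel.memLp_obs σ τ (le_of_mem_blockIdx hj),
    Finset.mul_sum, Finset.mul_sum, ← Finset.sum_add_distrib]
  refine Finset.sum_congr rfl fun j hj ↦ ?_
  calc _ = ∑ l ∈ blockIdx n m i,
          (σ ^ 2 * (blockWeight lam n m i j * blockWeight lam n m i l * ((min j l : ℝ) / n))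
            + if j = l then τ ^ 2 * blockWeight lam n m i j ^ 2 else 0) := by
        refine Finset.sum_congr rfl fun l hl ↦ ?_
        rw [hmodel.integral_obs_mul_obs σ τ (le_of_mem_blockIdx hj) (le_of_mem_blockIdx hl)]
        split_ifs with h
        · subst h; ring
        · ring
    _ = _ := by rw [Finset.sum_add_distrib, Finset.sum_ite_eq, if_pos hj, Finset.mul_sum]

theorem integrable_biasCorr (hmodel : IsSecondOrderModel n W η) (σ τ : ℝ) :
    Integrable (biasCorr lam n m (obs σ τ W η) i) := by
  simp only [funext (biasCorr_eq_sum_blockWeight _)]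
  exact integrable_finsetSum _ fun j hj ↦ (hmodel.integrable_sq_obs_increment σ τ
    (le_of_mem_blockIdx (Finset.mem_filter.1 hj).1)).const_mul _

theorem integral_biasCorr (hmodel : IsSecondOrderModel n W η) (σ τ : ℝ) :
    ∫ ω, biasCorr lam n m (obs σ τ W η) i ω
      = (σ ^ 2 / (2 * n) + τ ^ 2)
          * ∑ j ∈ blockIdx n m i with 1 ≤ j, blockWeight lam n m i j ^ 2 := by
  simp only [biasCorr_eq_sum_blockWeight]
  rw [integral_finsetSum _ fun j hj ↦ (hmodel.integrable_sq_obs_increment σ τ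
    (le_of_mem_blockIdx (Finset.mem_filter.1 hj).1)).const_mul _, Finset.mul_sum]
  refine Finset.sum_congr rfl fun j hj ↦ ?_
  obtain ⟨hj, hj_pos⟩ := Finset.mem_filter.1 hj
  rw [integral_const_mul, hmodel.integral_sq_obs_increment σ τ (le_of_mem_blockIdx hj) hj_pos]
  ring

theorem integral_sq_preAvg_sub_biasCorr (hmodel : IsSecondOrderModel n W η) (σ τ : ℝ)
    (hn : 0 < n) (hm : 0 < m) :
    ∫ ω, (preAvg lam n m (obs σ τ W η) i ω ^ 2 - biasCorr lam n m (obs σ τ W η) i ω)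
      = σ ^ 2 / m * (((i : ℝ) - 2) * (∑ j ∈ blockIdx n m i, blockWeight lam n m i j) ^ 2
          + ∑ j ∈ blockIdx n m i, ∑ l ∈ blockIdx n m i,
            blockWeight lam n m i j * blockWeight lam n m i l
              * min (blockPos n m i j) (blockPos n m i l))
        + τ ^ 2 * ∑ j ∈ blockIdx n m i with ¬ 1 ≤ j, blockWeight lam n m i j ^ 2
        - σ ^ 2 / (2 * n) * ∑ j ∈ blockIdx n m i with 1 ≤ j, blockWeight lam n m i j ^ 2 := by
  have hcov : ∑ j ∈ blockIdx n m i, ∑ l ∈ blockIdx n m i,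
        blockWeight lam n m i j * blockWeight lam n m i l * ((min j l : ℝ) / n)
      = (((i : ℝ) - 2) * (∑ j ∈ blockIdx n m i, blockWeight lam n m i j) ^ 2
          + ∑ j ∈ blockIdx n m i, ∑ l ∈ blockIdx n m i,
            blockWeight lam n m i j * blockWeight lam n m i l
              * min (blockPos n m i j) (blockPos n m i l)) / m := by
    rw [sq, Finset.sum_mul_sum]
    simp only [Finset.mul_sum, Finset.sum_div, ← Finset.sum_add_distrib]
    refine Finset.sum_congr rfl fun j _ ↦ Finset.sum_congr rfl fun l _ ↦ ?_
    rw [min_div_eq_add_min_blockPos_div (i := i) hn hm]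
    ring
  rw [integral_sub (hmodel.integrable_sq_preAvg σ τ) (hmodel.integrable_biasCorr σ τ),
    hmodel.integral_sq_preAvg σ τ, hmodel.integral_biasCorr σ τ, hcov,
    ← Finset.sum_filter_add_sum_filter_not (blockIdx n m i) (1 ≤ ·)
      fun j ↦ blockWeight lam n m i j ^ 2]
  ring

end IsSecondOrderModel

section BlockBounds

variable {lam : ℝ → ℝ} {B : ℝ} {n m i : ℕ}

theorem blockWeight_sq_le (hB : ∀ x ∈ Set.Icc 0 2, |lam x| ≤ B) {j : ℕ}
    (hj : blockPos n m i j ∈ Set.Icc 0 2) :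
    blockWeight lam n m i j ^ 2 ≤ B ^ 2 * ((m : ℝ) / n) ^ 2 := by
  rw [blockWeight, mul_pow, mul_comm, ← sq_abs (lam _)]
  gcongr
  exact hB _ hj

theorem sum_filter_not_one_le_blockWeight_sq_le (hB : ∀ x ∈ Set.Icc 0 2, |lam x| ≤ B)
    (hn : 0 < n) (hm : 0 < m) (him : i ≤ m) :
    ∑ j ∈ blockIdx n m i with ¬ 1 ≤ j, blockWeight lam n m i j ^ 2
      ≤ B ^ 2 * ((m : ℝ) / n) ^ 2 := by
  calc _ ≤ (blockIdx n m i |>.filter (¬ 1 ≤ ·)).card • (B ^ 2 * ((m : ℝ) / n) ^ 2) :=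
        Finset.sum_le_card_nsmul _ _ _ fun j hj ↦ blockWeight_sq_le hB <|
          (mem_blockIdx_iff hn hm him).1 (Finset.mem_filter.1 hj).1
    _ ≤ 1 • (B ^ 2 * ((m : ℝ) / n) ^ 2) := by
        gcongr
        refine Finset.card_le_one.2 fun j hj l hl ↦ ?_
        rw [Finset.mem_filter] at hj hl
        lia
    _ = _ := one_nsmul _

theorem abs_blockBias_le {σ τ D E a m n h S Q P₀ P₁ : ℝ} (hm : 0 < m) (hn : 0 < n)
    (hh : h = m / n) (ha : 0 ≤ a) (ham : a ≤ m)
    (hS : |S| ≤ h * D) (hQ : |Q - 1| ≤ h * E) (hP₀ : 0 ≤ P₀) (hP₀' : P₀ ≤ B ^ 2 * h ^ 2)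
    (hP₁ : 0 ≤ P₁) (hP₁' : P₁ ≤ 4 * B ^ 2) :
    |σ ^ 2 / m * (a * S ^ 2 + Q) + τ ^ 2 * P₀ - σ ^ 2 / (2 * n) * P₁ - σ ^ 2 / m|
      ≤ (σ ^ 2 * D ^ 2 + τ ^ 2 * B ^ 2) * h ^ 2 + σ ^ 2 * (E + 2 * B ^ 2) / n := by
  have hshift : |a / m * S ^ 2| ≤ D ^ 2 * h ^ 2 := by
    rw [abs_of_nonneg (by positivity), ← sq_abs S]
    calc a / m * |S| ^ 2 ≤ 1 * (h * D) ^ 2 := by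
          gcongr
          exact (div_le_one hm).2 ham
      _ = D ^ 2 * h ^ 2 := by ring
  have hquad : |(Q - 1) / m| ≤ E / n := by
    rw [abs_div, abs_of_pos hm, div_le_iff₀ hm]
    exact hQ.trans_eq (by rw [hh]; ring)
  have hincr : P₁ / (2 * n) ≤ 2 * B ^ 2 / n := by
    rw [div_le_div_iff₀ (by positivity) hn]
    nlinarith
  calc |σ ^ 2 / m * (a * S ^ 2 + Q) + τ ^ 2 * P₀ - σ ^ 2 / (2 * n) * P₁ - σ ^ 2 / m|
      = |σ ^ 2 * (a / m * S ^ 2) + σ ^ 2 * ((Q - 1) / m) + τ ^ 2 * P₀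
          - σ ^ 2 * (P₁ / (2 * n))| := by ring_nf
    _ ≤ σ ^ 2 * |a / m * S ^ 2| + σ ^ 2 * |(Q - 1) / m| + τ ^ 2 * |P₀|
          + σ ^ 2 * |P₁ / (2 * n)| := by
        rw [← abs_sq σ, ← abs_sq τ, ← abs_mul, ← abs_mul, ← abs_mul, ← abs_mul, abs_sq, abs_sq]
        exact (abs_sub _ _).trans (by gcongr; exact abs_add_three _ _ _)
    _ ≤ σ ^ 2 * (D ^ 2 * h ^ 2) + σ ^ 2 * (E / n) + τ ^ 2 * (B ^ 2 * h ^ 2)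
          + σ ^ 2 * (2 * B ^ 2 / n) := by
        rw [abs_of_nonneg hP₀, abs_of_nonneg (by positivity : 0 ≤ P₁ / (2 * n))]
        gcongr
    _ = _ := by ring

theorem abs_integral_sq_preAvg_sub_biasCorr_sub_le {Ω : Type*} [MeasureSpace Ω]
    {W η : ℕ → Ω → ℝ} (hmodel : IsSecondOrderModel n W η) (σ τ : ℝ)
    (hbv : BoundedVariationOn lam (Set.Icc 0 2)) (hB : ∀ x ∈ Set.Icc 0 2, |lam x| ≤ B)
    (hmean : ∫ x in 0..2, lam x = 0) (hnorm : ∫ u in 0..2, bigLam lam u ^ 2 = 1)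
    {D : ℝ} (hD : D = (eVariationOn lam (Set.Icc 0 2)).toReal + 2 * B)
    (hi : 2 ≤ i) (him : i ≤ m) (hmn : m ≤ n) :
    |(∫ ω, (preAvg lam n m (obs σ τ W η) i ω ^ 2 - biasCorr lam n m (obs σ τ W η) i ω))
        - σ ^ 2 / m|
      ≤ (σ ^ 2 * D ^ 2 + τ ^ 2 * B ^ 2) * ((m : ℝ) / n) ^ 2
        + σ ^ 2 * (D * (4 * B + D) * 2 + 2 * B ^ 2) / n := by
  have hm : 0 < m := by lia
  have hn : 0 < n := by lia
  have hh : (0 : ℝ) < m / n := by positivity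
  have hh1 : (m : ℝ) / n ≤ 1 := (div_le_one (by positivity)).2 (Nat.cast_le.2 hmn)
  have ha : (0 : ℝ) ≤ i - 2 := sub_nonneg.2 (by exact_mod_cast hi)
  have hJ : ∀ j : ℕ, j ∈ blockIdx n m i ↔ (m : ℝ) / n * j - ((i : ℝ) - 2) ∈ Set.Icc 0 2 :=
    fun j ↦ mem_blockIdx_iff hn hm him
  have hB0 : 0 ≤ B := (abs_nonneg _).trans (hB 0 (by norm_num))
  have hD0 : 0 ≤ D := by rw [hD]; positivity
  have hint : IntervalIntegrable lam volume 0 2 :=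
    intervalIntegrable_of_boundedVariationOn (by rwa [Set.uIcc_of_le zero_le_two])
  have hsum := abs_gridSum_sub_integral_le zero_le_two hbv hB hh (by rwa [zero_add]) hJ
  have hquad := abs_sum_sum_grid_mul_min_sub_integral_sq_le zero_le_two hbv hB hh ha hJ
  have hsq := sum_sq_grid_le zero_le_two hB hh ha hJ
  rw [hmean, sub_zero, Finset.mul_sum, ← hD] at hsum
  rw [integral_sq_integral_right_eq_bigLam_sq hint hmean, hnorm, ← hD] at hquad
  rw [hmodel.integral_sq_preAvg_sub_biasCorr σ τ hn hm]
  refine abs_blockBias_le (by positivity) (by positivity) rfl ha ?_ hsum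
    (hquad.trans ?_) (Finset.sum_nonneg fun _ _ ↦ sq_nonneg _)
    (sum_filter_not_one_le_blockWeight_sq_le hB hn hm him)
    (Finset.sum_nonneg fun _ _ ↦ sq_nonneg _) ?_
  · linarith [(Nat.cast_le (α := ℝ)).2 him]
  · calc (m : ℝ) / n * D * (2 * (B * 2) + m / n * D) * 2
        ≤ m / n * D * (2 * (B * 2) + 1 * D) * 2 := by gcongr
      _ = m / n * (D * (4 * B + D) * 2) := by ring
  · calc ∑ j ∈ blockIdx n m i with 1 ≤ j, blockWeight lam n m i j ^ 2
        ≤ ∑ j ∈ blockIdx n m i, blockWeight lam n m i j ^ 2 :=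
          Finset.sum_le_sum_of_subset_of_nonneg (Finset.filter_subset _ _) fun _ _ _ ↦ sq_nonneg _
      _ ≤ 1 * B ^ 2 * (2 + 2 * 1) := hsq.trans (by gcongr)
      _ = 4 * B ^ 2 := by ring

end BlockBounds

theorem abs_sum_Icc_two_sub_le {x : ℕ → ℝ} {s ε : ℝ} {m : ℕ} (hm : 0 < m)
    (hx : ∀ i ∈ Finset.Icc 2 m, |x i - s / m| ≤ ε) :
    |∑ i ∈ Finset.Icc 2 m, x i - s| ≤ (m - 1) * ε + |s| / m := by
  have hm' : (m : ℝ) ≠ 0 := by positivity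
  have hcard : ((Finset.Icc 2 m).card : ℝ) = m - 1 := by
    rw [Nat.card_Icc, Nat.add_sub_add_right m 1 1, Nat.cast_sub hm, Nat.cast_one]
  have hsplit : ∑ i ∈ Finset.Icc 2 m, x i - s = ∑ i ∈ Finset.Icc 2 m, (x i - s / m) - s / m := by
    rw [Finset.sum_sub_distrib, Finset.sum_const, nsmul_eq_mul, hcard]
    field_simp
    ring
  rw [hsplit, ← hcard, ← nsmul_eq_mul, ← Nat.abs_cast m, ← abs_div, Nat.abs_cast]
  exact (abs_sub _ _).trans (add_le_add_left ((Finset.abs_sum_le_sum_abs _ _).trans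
    (Finset.sum_le_card_nsmul _ _ _ hx)) _)

open Filter in
theorem eventually_mOf_bounds {c : ℝ} (hc : 0 < c) :
    ∀ᶠ n : ℕ in atTop, c * √n / 2 ≤ mOf c n ∧ mOf c n ≤ 2 * c * √n := by
  have htendsto : Tendsto (fun n : ℕ ↦ √(n : ℝ)) atTop atTop :=
    tendsto_sqrt_atTop.comp tendsto_natCast_atTop_atTop
  filter_upwards [htendsto.eventually_ge_atTop c, htendsto.eventually_ge_atTop c⁻¹] with n hcn hcn'
  have hk_le : (⌊√n / c⌋₊ : ℝ) ≤ √n / c := Nat.floor_le (by positivity)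
  have hk_lt : √n / c / 2 < ⌊√n / c⌋₊ := Nat.div_two_lt_floor ((one_le_div hc).2 hcn)
  have hk : (0 : ℝ) < ⌊√n / c⌋₊ := lt_of_le_of_lt (by positivity) hk_lt
  have hsq : √(n : ℝ) * √n = n := Real.mul_self_sqrt n.cast_nonneg
  have hlower : c * √n ≤ n / ⌊√n / c⌋₊ := by
    rw [le_div_iff₀ hk]
    calc c * √n * ⌊√n / c⌋₊ ≤ c * √n * (√n / c) := by gcongr
      _ = n := by rw [mul_div_assoc', mul_assoc, hsq, mul_div_cancel_left₀ _ hc.ne']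
  have hupper : (n : ℝ) / ⌊√n / c⌋₊ ≤ 2 * c * √n := by
    rw [div_le_iff₀ hk]
    calc (n : ℝ) = √n * √n := hsq.symm
      _ = 2 * c * √n * (√n / c / 2) := by field_simp
      _ ≤ 2 * c * √n * ⌊√n / c⌋₊ := by gcongr
  have hone : 1 ≤ c * √n := by rwa [inv_le_iff_one_le_mul₀' hc] at hcn'
  rw [mOf, ← Nat.floor_div_eq_div (K := ℝ)]
  exact ⟨(by gcongr : c * √n / 2 ≤ _).trans (Nat.div_two_lt_floor (hone.trans hlower)).le,
    (Nat.floor_le (by positivity)).trans hupper⟩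

theorem mOf_le (c : ℝ) (n : ℕ) : mOf c n ≤ n := Nat.div_le_self _ _

theorem abs_integral_sum_sq_preAvg_sub_biasCorr_sub_le {Ω : Type*} [MeasureSpace Ω] {n m : ℕ}
    {W η : ℕ → Ω → ℝ} (hmodel : IsSecondOrderModel n W η) (σ τ : ℝ) {lam : ℝ → ℝ} {B D : ℝ}
    (hbv : BoundedVariationOn lam (Set.Icc 0 2)) (hB : ∀ x ∈ Set.Icc 0 2, |lam x| ≤ B)
    (hmean : ∫ x in 0..2, lam x = 0) (hnorm : ∫ u in 0..2, bigLam lam u ^ 2 = 1)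
    (hD : D = (eVariationOn lam (Set.Icc 0 2)).toReal + 2 * B) (hm : 0 < m) (hmn : m ≤ n) :
    |(∫ ω, ∑ i ∈ Finset.Icc 2 m,
          (preAvg lam n m (obs σ τ W η) i ω ^ 2 - biasCorr lam n m (obs σ τ W η) i ω)) - σ ^ 2|
      ≤ (m - 1) * ((σ ^ 2 * D ^ 2 + τ ^ 2 * B ^ 2) * ((m : ℝ) / n) ^ 2
          + σ ^ 2 * (D * (4 * B + D) * 2 + 2 * B ^ 2) / n) + σ ^ 2 / m := by
  rw [integral_finsetSum _ fun i _ ↦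
    (hmodel.integrable_sq_preAvg σ τ).sub' (hmodel.integrable_biasCorr σ τ)]
  refine (abs_sum_Icc_two_sub_le hm fun i hi ↦ ?_).trans_eq (by rw [abs_sq])
  rw [Finset.mem_Icc] at hi
  exact abs_integral_sq_preAvg_sub_biasCorr_sub_le hmodel σ τ hbv hB hmean hnorm hD hi.1 hi.2 hmn

theorem sum_block_error_le_div {c r m n K₁ K₂ s : ℝ} (hc : 0 < c) (hr : 0 < r) (hn : n = r ^ 2)
    (hK₁ : 0 ≤ K₁) (hK₂ : 0 ≤ K₂) (hs : 0 ≤ s) (hlower : c * r / 2 ≤ m) (hupper : m ≤ 2 * c * r) :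
    (m - 1) * (K₁ * (m / n) ^ 2 + K₂ / n) + s / m
      ≤ (8 * c ^ 3 * K₁ + 2 * c * K₂ + 2 * s / c) / r := by
  subst hn
  have hm : 0 < m := lt_of_lt_of_le (by positivity) hlower
  calc (m - 1) * (K₁ * (m / r ^ 2) ^ 2 + K₂ / r ^ 2) + s / m
      ≤ 2 * c * r * (K₁ * (2 * c * r / r ^ 2) ^ 2 + K₂ / r ^ 2) + s / (c * r / 2) := by
        gcongr
        linarith
    _ = (8 * c ^ 3 * K₁ + 2 * c * K₂ + 2 * s / c) / r := by
        field_simp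
        ring

open Filter in
theorem integratedVolatilityEstimator_bias_general (σ τ : ℝ) {c : ℝ} (hc : 0 < c)
    {lam : ℝ → ℝ} (hbv : BoundedVariationOn lam (Set.Icc 0 2))
    (hmean : ∫ x in 0..2, lam x = 0) (hnorm : ∫ u in 0..2, bigLam lam u ^ 2 = 1)
    (Ω : ℕ → Type*) [∀ n, MeasureSpace (Ω n)] (W η : (n : ℕ) → ℕ → Ω n → ℝ)
    (hmodel : ∀ n, IsSecondOrderModel n (W n) (η n)) :
    ∃ C > 0, ∃ N : ℕ, ∀ n ≥ N,
      |(∫ ω, ∑ i ∈ Finset.Icc 2 (mOf c n),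
            ((preAvg lam n (mOf c n) (obs σ τ (W n) (η n)) i ω) ^ 2
              - biasCorr lam n (mOf c n) (obs σ τ (W n) (η n)) i ω))
          - σ ^ 2| ≤ C / √n := by
  obtain ⟨B, hB⟩ := exists_abs_le_of_boundedVariationOn hbv
  have hB0 : 0 ≤ B := (abs_nonneg _).trans (hB 0 (by norm_num))
  set D := (eVariationOn lam (Set.Icc 0 2)).toReal + 2 * B with hD
  set K₁ := σ ^ 2 * D ^ 2 + τ ^ 2 * B ^ 2
  set K₂ := σ ^ 2 * (D * (4 * B + D) * 2 + 2 * B ^ 2)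
  obtain ⟨N, hN⟩ := eventually_atTop.1 (eventually_mOf_bounds hc)
  refine ⟨8 * c ^ 3 * K₁ + 2 * c * K₂ + 2 * σ ^ 2 / c + 1, by positivity, max N 1, fun n hn ↦ ?_⟩
  obtain ⟨hlower, hupper⟩ := hN n (le_of_max_le_left hn)
  have hn_pos : 0 < n := le_of_max_le_right hn
  have hr : 0 < √(n : ℝ) := by positivity
  have hm : 0 < mOf c n := Nat.cast_pos.1 (lt_of_lt_of_le (by positivity) hlower)
  calc _ ≤ _ := abs_integral_sum_sq_preAvg_sub_biasCorr_sub_le (hmodel n) σ τ hbv hB hmean hnorm hD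
        hm (mOf_le c n)
    _ ≤ _ := sum_block_error_le_div hc hr (Real.sq_sqrt n.cast_nonneg).symm (by positivity)
        (by positivity) (sq_nonneg σ) hlower hupper
    _ ≤ _ := div_le_div_of_nonneg_right (lt_add_one _).le hr.le

theorem integratedVolatilityEstimator_bias (σ τ c : ℝ) (hσ : 0 < σ) (hτ : 0 < τ) (hc : 0 < c)
    (lam : ℝ → ℝ) (hlam : IsPreAverageFn lam)
    (Ω : ℕ → Type*) [∀ n, MeasureSpace (Ω n)] [∀ n, IsProbabilityMeasure (ℙ : Measure (Ω n))]
    (W η : (n : ℕ) → ℕ → Ω n → ℝ)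
    (hmodel : ∀ n, IsSimplifiedModel n (W n) (η n)) :
    ∃ C > 0, ∃ N : ℕ, ∀ n ≥ N,
      |(∫ ω, ∑ i ∈ Finset.Icc 2 (mOf c n),
            ((preAvg lam n (mOf c n) (obs σ τ (W n) (η n)) i ω) ^ 2
              - biasCorr lam n (mOf c n) (obs σ τ (W n) (η n)) i ω))
          - σ ^ 2| ≤ C / Real.sqrt n := by
  exact integratedVolatilityEstimator_bias_general σ τ hc hlam.boundedVariationOn
    hlam.integral_eq_zero hlam.integral_bigLam_sq Ω W η fun n ↦ (hmodel n).isSecondOrderModel
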